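/- For any positive integer g and any partitions λ of k and λ' of k' with λ ≰ λ', there exists a finite simple graph G of girth at least g which is λ-choosable but not λ'-choosable. -/

import Mathlib

/-- `lam` is a partition of `k`: a finite multiset of positive integers summing to `k`. -/
def IsPartitionOf (lam : Multiset ℕ) (k : ℕ) : Prop :=
  (∀ a ∈ lam, 0 < a) ∧ lam.sum = k

/-- `lam'` is a refinement of `lam`: `lam'` is obtained from `lam` by replacing
some parts of `lam` by partitions of these parts. -/
def PartitionRefines (lam' lam : Multiset ℕ) : Prop :=
  ∃ M : Multiset (Multiset ℕ),
    M.map Multiset.sum = lam ∧ M.join = lam' ∧ ∀ m ∈ M, ∀ a ∈ m, 0 < a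

/-- `lam ≤ lam'`: there is a partition `lam''` obtained from `lam` by increasing
some of its parts such that `lam'` is a refinement of `lam''`. -/
def PartitionLE (lam lam' : Multiset ℕ) : Prop :=
  ∃ lam'' : Multiset ℕ, Multiset.Rel (· ≤ ·) lam lam'' ∧ PartitionRefines lam' lam''

/-- `L` is a `lam`-assignment: a `k`-assignment (`k = lam.sum`) such that the set of colours
`⋃ v, L v` can be partitioned into colour groups `C_1, …, C_q` with `|L v ∩ C_i| = k_i`
for every vertex `v` and every part `k_i` of `lam`. -/
def IsLamAssignment {V : Type*} (lam : Multiset ℕ) (L : V → Finset ℕ) : Prop :=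
  (∀ v, (L v).card = lam.sum) ∧
  ∃ (q : ℕ) (ks : Fin q → ℕ) (Cs : Fin q → Finset ℕ),
    (↑(List.ofFn ks) : Multiset ℕ) = lam ∧
    (Pairwise fun i j => Disjoint (Cs i) (Cs j)) ∧
    (∀ c : ℕ, (∃ v, c ∈ L v) ↔ ∃ i, c ∈ Cs i) ∧
    ∀ v i, ((L v) ∩ Cs i).card = ks i

/-- `G` is `lam`-choosable: `G` has a proper `L`-colouring for every `lam`-assignment `L`. -/
def LamChoosable {V : Type*} (lam : Multiset ℕ) (G : SimpleGraph V) : Prop :=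
  ∀ L : V → Finset ℕ, IsLamAssignment lam L →
    ∃ f : V → ℕ, (∀ v, f v ∈ L v) ∧ ∀ ⦃u w⦄, G.Adj u w → f u ≠ f w

/-!
Sparse hypergraphs with the vertex Ramsey property exist by induction on the sparsity: in the
partite construction, copies of a partite hypergraph are amalgamated along one part, placed on
the edges of a less sparse Ramsey hypergraph, until the colour of a vertex depends only on its
part. Attaching copies of a graph by pendant edges to the edges of such a hypergraph, as Tutte and
Zykov did, yields gadgets: graphs of large girth which can be coloured from all lists of more than
`k` colours but are not `k`-colourable.

Take a gadget, with `k = k_i - 1`, for each type, that is, for each part `i` of `lam` together with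
a list of `lam'`, whose vertices all receive this list. Its vertices can be coloured from group `i`
of a `lam`-assignment, so edges between different parts of `lam` do no harm to `lam`-choosability.
Joining layers of such gadgets along a Ramsey hypergraph forces, in some layer, the colours used
for different parts of `lam` to be disjoint. A colour group `j` of `lam'` can then be more than half
filled by at most one part `φ j`: for every other part `i`, some list in group `j` avoids the
colours used for `i`. As `lam ≰ lam'`, the parts of `lam'` sent to some `i` by `φ` sum to less than
`k_i`, so the gadget of type `i` carrying the avoiding lists would be coloured with fewer than
`k_i` colours.
-/

open Finset Function

section SparseFamilies

variable {E V : Type*}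

/-- The points of the member `I e` of a family of sets that lie in another member with index
in `F`. -/
def shared (I : E → Set V) (F : Finset E) (e : E) : Set V :=
  {v ∈ I e | ∃ e' ∈ F, e' ≠ e ∧ v ∈ I e'}

/-- A family of sets, seen as the edges of a hypergraph, is `g`-sparse if it has no Berge cycle
with at most `g` edges. This is encoded through leaves: any nonempty choice of at most `g` edges
contains one meeting the others in at most one point. -/
def Sparse (g : ℕ) (I : E → Set V) : Prop :=
  ∀ F : Finset E, F.Nonempty → #F ≤ g → ∃ e ∈ F, (shared I F e).Subsingleton

variable {g : ℕ} {I : E → Set V}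

theorem Sparse.exists_leaf_marked (h : Sparse g I) {F : Finset E} (hF : F.Nonempty)
    (hFg : #F ≤ g) {P : Set V} (hP : P.Subsingleton) :
    ∃ e ∈ F, (shared I F e ∪ I e ∩ P).Subsingleton := by
  classical
  induction F using Finset.strongInduction generalizing P with
  | H F ih =>
    obtain ⟨e, he, hleaf⟩ := h F hF hFg
    by_cases hPe : I e ∩ P ⊆ shared I F e
    · exact ⟨e, he, by rwa [Set.union_eq_self_of_subset_right hPe]⟩
    obtain ⟨p, ⟨hpe, hpP⟩, hp⟩ := Set.not_subset.1 hPe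
    rcases (F.erase e).eq_empty_or_nonempty with hempty | hne
    · refine ⟨e, he, (hP.anti Set.inter_subset_right).anti (Set.union_subset ?_ le_rfl)⟩
      rintro v ⟨-, e', he', hne, -⟩
      exact absurd (mem_erase.2 ⟨hne, he'⟩) (by simp [hempty])
    -- Remove the leaf `e` and mark, in place of `p`, the point attaching `e` to the rest.
    obtain ⟨e', he', hleaf'⟩ :=
      ih _ (erase_ssubset he) hne ((card_le_card (erase_subset _ _)).trans hFg) hleaf
    obtain ⟨hee', heF'⟩ := mem_erase.1 he'
    refine ⟨e', heF', hleaf'.anti ?_⟩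
    rintro v (⟨hv, e'', he'', hne'', hv''⟩ | ⟨hv, hvP⟩)
    · by_cases h : e'' = e
      · exact .inr ⟨hv, h ▸ hv'', e', heF', hee', hv⟩
      · exact .inl ⟨hv, e'', mem_erase.2 ⟨h, he''⟩, hne'', hv''⟩
    · obtain rfl := hP hvP hpP
      exact absurd ⟨hpe, e', heF', hee', hv⟩ hp

/-- The other edges of `F` meet the sparse part `range φ` only in the point of `P`, so a leaf of
that part, with `P` marked as shared, is a leaf of `F`. -/
theorem Sparse.exists_leaf_of_comp {E' : Type*} {φ : E' → E} (h : Sparse g (I ∘ φ))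
    (hφ : Injective φ) {F : Finset E} (hFg : #F ≤ g) (hF : ∃ e, φ e ∈ F) {P : Set V}
    (hP : P.Subsingleton)
    (hsep : ∀ e, φ e ∈ F → ∀ e' ∈ F, e' ∉ Set.range φ → I (φ e) ∩ I e' ⊆ P) :
    ∃ e ∈ F, (shared I F e).Subsingleton := by
  have hcard : #(F.preimage φ hφ.injOn) ≤ g :=
    (card_le_card_of_injOn φ (fun _ he => mem_preimage.1 he) hφ.injOn).trans hFg
  obtain ⟨e, he, hleaf⟩ := h.exists_leaf_marked
    (hF.imp fun _ he => mem_preimage.2 he) hcard hP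
  rw [mem_preimage] at he
  refine ⟨φ e, he, hleaf.anti ?_⟩
  rintro v ⟨hv, e', he', hne, hv'⟩
  by_cases hr : e' ∈ Set.range φ
  · obtain ⟨e', rfl⟩ := hr
    exact .inl ⟨hv, e', mem_preimage.2 he', fun h => hne (congrArg φ h), hv'⟩
  · exact .inr ⟨hv, hsep e he e' he' hr ⟨hv, hv'⟩⟩

theorem Sparse.comp {E' : Type*} {φ : E' → E} (h : Sparse g I) (hφ : Injective φ) :
    Sparse g (I ∘ φ) := by
  intro F hF hFg
  obtain ⟨e, he, hleaf⟩ := h (F.map ⟨φ, hφ⟩) (hF.map) (by rwa [card_map])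
  obtain ⟨e, heF, rfl⟩ := mem_map.1 he
  refine ⟨e, heF, hleaf.anti ?_⟩
  rintro v ⟨hv, e', he', hne, hv'⟩
  exact ⟨hv, φ e', mem_map_of_mem _ he', hφ.ne hne, hv'⟩

theorem Sparse.image {V' : Type*} {φ : V → V'} (h : Sparse g I) (hφ : Injective φ) :
    Sparse g (fun e => φ '' I e) := by
  intro F hF hFg
  obtain ⟨e, he, hleaf⟩ := h F hF hFg
  refine ⟨e, he, (hleaf.image φ).anti ?_⟩
  rintro _ ⟨⟨v, hv, rfl⟩, e', he', hne, hv'⟩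
  exact ⟨v, ⟨hv, e', he', hne, (hφ.mem_set_image).1 hv'⟩, rfl⟩

theorem sparse_of_pairwise_disjoint (h : Pairwise (Disjoint on I)) : Sparse g I :=
  fun _ ⟨e, he⟩ _ => ⟨e, he, fun _ ⟨hv, _, _, hne, hv'⟩ =>
    (Set.disjoint_left.1 (h hne) hv' hv).elim⟩

section Sigma

variable {K : Type*} {F : K → Type*} {I : ∀ k, F k → Set V} {J : K → Set V}

theorem exists_leaf_of_sigma [DecidableEq K] (hI : ∀ k, Sparse g (I k))
    (hIJ : ∀ k k', k ≠ k' → ∀ e e', I k e ∩ I k' e' ⊆ J k) {A : Finset (Σ k, F k)}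
    (hA : #A ≤ g) (hJ : ∃ k ∈ A.image Sigma.fst, (shared J (A.image Sigma.fst) k).Subsingleton) :
    ∃ x ∈ A, (shared (fun x : Σ k, F k => I x.1 x.2) A x).Subsingleton := by
  obtain ⟨k, hk, hleaf⟩ := hJ
  obtain ⟨⟨k, e⟩, he, rfl⟩ := mem_image.1 hk
  refine Sparse.exists_leaf_of_comp (I := fun x : Σ k, F k => I x.1 x.2) (hI k)
    sigma_mk_injective hA ⟨e, he⟩ hleaf ?_
  rintro e - ⟨k', e'⟩ he' hk' v ⟨hv, hv'⟩
  have hne : k' ≠ k := by rintro rfl; exact hk' ⟨e', rfl⟩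
  exact ⟨hIJ _ _ hne.symm e e' ⟨hv, hv'⟩, k', mem_image_of_mem Sigma.fst he', hne,
    hIJ _ _ hne e' e ⟨hv', hv⟩⟩

theorem Sparse.sigma (hJ : Sparse g J) (hI : ∀ k, Sparse g (I k))
    (hIJ : ∀ k k', k ≠ k' → ∀ e e', I k e ∩ I k' e' ⊆ J k) :
    Sparse g (fun x : Σ k, F k => I x.1 x.2) := by
  classical
  exact fun A hA hAg => exists_leaf_of_sigma hI hIJ hAg
    (hJ _ (hA.image _) (card_image_le.trans hAg))

theorem Sparse.sigma_succ (hJ : Sparse g J) (hI : ∀ k, Sparse (g + 1) (I k))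
    (hIJ : ∀ k k', k ≠ k' → ∀ e e', I k e ∩ I k' e' ⊆ J k)
    (hIJ' : ∀ k e, (I k e ∩ J k).Subsingleton) :
    Sparse (g + 1) (fun x : Σ k, F k => I x.1 x.2) := by
  classical
  intro A hA hAg
  by_cases hcard : #(A.image Sigma.fst) ≤ g
  · exact exists_leaf_of_sigma hI hIJ hAg (hJ _ (hA.image _) hcard)
  -- Otherwise the edges of `A` lie in distinct gadgets, and meet each other inside `J` only.
  have hinj : Set.InjOn Sigma.fst (A : Set (Σ k, F k)) :=
    card_image_iff.1 (card_image_le.antisymm (by omega))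
  obtain ⟨x, hx⟩ := hA
  refine ⟨x, hx, (hIJ' x.1 x.2).anti ?_⟩
  rintro v ⟨hv, x', hx', hne, hv'⟩
  exact ⟨hv, hIJ _ _ (fun h => hne (hinj hx' hx h.symm)) _ _ ⟨hv, hv'⟩⟩

theorem Sparse.sigma_of_disjoint (hI : ∀ k, Sparse g (I k))
    (hdisj : ∀ k k', k ≠ k' → ∀ e e', Disjoint (I k e) (I k' e')) :
    Sparse g (fun x : Σ k, F k => I x.1 x.2) :=
  Sparse.sigma (J := fun _ => ∅) (sparse_of_pairwise_disjoint fun _ _ _ => by simp) hI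
    fun k k' hne e e' => (hdisj k k' hne e e').le_bot

end Sigma

theorem Sparse.sum_pendant {D : Type*} {P : D → Set V} (hI : Sparse g I)
    (hP : ∀ d, {v ∈ P d | ∃ x, x ≠ Sum.inr d ∧ v ∈ Sum.elim I P x}.Subsingleton) :
    Sparse g (Sum.elim I P) := by
  intro F hF hFg
  by_cases hpend : ∃ d, Sum.inr d ∈ F
  · obtain ⟨d, hd⟩ := hpend
    exact ⟨_, hd, (hP d).anti fun v ⟨hv, x, _, hne, hv'⟩ => ⟨hv, x, hne, hv'⟩⟩
  · refine Sparse.exists_leaf_of_comp (I := Sum.elim I P) (P := ∅) hI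
      Sum.inl_injective hFg ?_ Set.subsingleton_empty ?_
    · obtain ⟨e | d, he⟩ := hF
      exacts [⟨e, he⟩, (hpend ⟨d, he⟩).elim]
    · rintro e - (e' | d) he' hr
      exacts [(hr ⟨e', rfl⟩).elim, (hpend ⟨d, he'⟩).elim]

theorem Sparse.sum {V' E' : Type*} {I' : E' → Set V'} (hI : Sparse g I) (hI' : Sparse g I') :
    Sparse g (Sum.elim (fun e => Sum.inl '' I e) (fun e => Sum.inr '' I' e) :
      E ⊕ E' → Set (V ⊕ V')) := by
  intro F ⟨e, he⟩ hFg
  rcases e with e | e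
  · refine Sparse.exists_leaf_of_comp (φ := Sum.inl) (P := ∅) (hI.image Sum.inl_injective)
      Sum.inl_injective hFg ⟨e, he⟩ Set.subsingleton_empty ?_
    rintro e - (e' | e') - hr
    · exact (hr ⟨e', rfl⟩).elim
    · rintro _ ⟨⟨v, -, rfl⟩, ⟨w, -, ⟨⟩⟩⟩
  · refine Sparse.exists_leaf_of_comp (φ := Sum.inr) (P := ∅) (hI'.image Sum.inr_injective)
      Sum.inr_injective hFg ⟨e, he⟩ Set.subsingleton_empty ?_
    rintro e - (e' | e') - hr
    · rintro _ ⟨⟨v, -, rfl⟩, ⟨w, -, ⟨⟩⟩⟩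
    · exact (hr ⟨e', rfl⟩).elim

theorem Sparse.blowUp {X : Type*} {ρ : V → X} {D : X → Type*} {G : ∀ x, D x → Set V}
    (hG : ∀ x, Sparse g (G x)) (hGρ : ∀ x d, G x d ⊆ ρ ⁻¹' {x})
    (hI : Sparse g (fun e => ρ '' I e)) (hIρ : ∀ e, Set.InjOn ρ (I e)) :
    Sparse g (Sum.elim (fun x : Σ x, D x => G x.1 x.2) I) := by
  classical
  intro F hF hFg
  have hφ (x : X) : Injective fun d : D x => (Sum.inl ⟨x, d⟩ : (Σ x, D x) ⊕ E) :=
    Sum.inl_injective.comp sigma_mk_injective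
  -- A leaf inside the gadget at `x`, if the edges of `I` meet this gadget in at most one point.
  have gadget_leaf (x : X) (d : D x) (hd : Sum.inl ⟨x, d⟩ ∈ F) {P : Set V}
      (hP : P.Subsingleton) (hsep : ∀ e, Sum.inr e ∈ F → I e ∩ ρ ⁻¹' {x} ⊆ P) :
      ∃ y ∈ F, (shared (Sum.elim (fun x : Σ x, D x => G x.1 x.2) I) F y).Subsingleton := by
    refine Sparse.exists_leaf_of_comp
      (I := Sum.elim (fun x : Σ x, D x => G x.1 x.2) I) (hG x) (hφ x) hFg ⟨d, hd⟩ hP ?_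
    rintro d - (⟨x', d'⟩ | e) he hr v ⟨hv, hv'⟩
    · obtain rfl : x = x' := (hGρ x d hv).symm.trans (hGρ x' d' hv')
      exact (hr ⟨d', rfl⟩).elim
    · exact hsep e he ⟨hv', hGρ x d hv⟩
  rcases F.toRight.eq_empty_or_nonempty with hempty | hne
  · obtain ⟨⟨x, d⟩ | e, hx⟩ := hF
    · refine gadget_leaf x d hx Set.subsingleton_empty fun e he => ?_
      exact absurd (mem_toRight.2 he) (by simp [hempty])
    · exact absurd (mem_toRight.2 hx) (by simp [hempty])
  obtain ⟨e, he, hleaf⟩ := hI F.toRight hne (card_toRight_le.trans hFg)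
  by_cases hfree : ∃ v ∈ I e, ρ v ∉ shared (fun e => ρ '' I e) F.toRight e ∧
      ∃ d, Sum.inl ⟨ρ v, d⟩ ∈ F
  · obtain ⟨v, hv, hv', d, hd⟩ := hfree
    refine gadget_leaf (ρ v) d hd (Set.subsingleton_singleton (a := v)) ?_
    rintro e' he' w ⟨hw, hwv⟩
    by_cases h : e' = e
    · subst h
      exact hIρ e' hw hv hwv
    · exact absurd ⟨⟨v, hv, rfl⟩, e', mem_toRight.2 he', h, w, hw, hwv⟩ hv'
  · have hshared : ∀ v ∈ shared (Sum.elim (fun x : Σ x, D x => G x.1 x.2) I) F (Sum.inr e),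
        v ∈ I e ∧ ρ v ∈ shared (fun e => ρ '' I e) F.toRight e := by
      rintro v ⟨hv, ⟨x, d⟩ | e', hx, hne, hv'⟩
      · obtain rfl : ρ v = x := hGρ x d hv'
        exact ⟨hv, by_contra fun h => hfree ⟨v, hv, h, d, hx⟩⟩
      · exact ⟨hv, ⟨v, hv, rfl⟩, e', mem_toRight.2 hx, fun h => hne (congrArg _ h), v, hv', rfl⟩
    refine ⟨_, mem_toRight.1 he, fun u hu v hv => hIρ e (hshared u hu).1 (hshared v hv).1 ?_⟩
    exact hleaf (hshared u hu).2 (hshared v hv).2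

end SparseFamilies

section RamseyHypergraphs

/-- There is a finite `g`-sparse hypergraph with edges parametrized by `R` such that every
colouring of its vertices by `C` has a monochromatic edge. -/
def HasSparseRamsey (g : ℕ) (R C : Type) : Prop :=
  ∃ (Y E : Type) (_ : Finite Y) (_ : Finite E) (ed : E → R → Y),
    (∀ e, Injective (ed e)) ∧ Sparse g (fun e => Set.range (ed e)) ∧
      ∀ χ : Y → C, ∃ e c, ∀ r, χ (ed e r) = c

/-- The hypergraph on `A` with edges `a b` has a finite `g`-sparse lift (with projections `τ` of
vertices and `π` of edges) in which every colouring by `C` contains a copy `e` of each edge whose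
colours over `S` depend only on the projection. This is the invariant of the partite
construction, which lets `S` grow from `∅` to the whole of `A`. -/
def HasSparseLift (g : ℕ) (C : Type) {A B R : Type} (a : B → R → A) (S : Set A) : Prop :=
  ∃ (V E : Type) (_ : Finite V) (_ : Finite E) (τ : V → A) (π : E → B) (ed : E → R → V),
    (∀ e r, τ (ed e r) = a (π e) r) ∧ Sparse g (fun e => Set.range (ed e)) ∧
      ∀ χ : V → C, ∃ κ : A → C, ∀ b, ∃ e, π e = b ∧ ∀ r, a b r ∈ S → χ (ed e r) = κ (a b r)

theorem exists_embedding_forall_eq {R C : Type*} [Finite R] [Finite C] [Nonempty C]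
    (κ : C × R → C) : ∃ (f : R ↪ C × R) (c : C), ∀ r, κ (f r) = c := by
  classical
  have := Fintype.ofFinite R
  have := Fintype.ofFinite C
  obtain ⟨c, hc⟩ := Fintype.exists_le_card_fiber_of_mul_le_card κ (n := Fintype.card R)
    (Fintype.card_prod C R).ge
  rw [← Fintype.card_subtype] at hc
  obtain ⟨i⟩ := Embedding.nonempty_of_card_le hc
  exact ⟨i.trans (Embedding.subtype _), c, fun r => (i r).2⟩

theorem hasSparseRamsey_zero (R C : Type) [Finite R] [Finite C] [Nonempty C] :
    HasSparseRamsey 0 R C :=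
  ⟨C × R, R ↪ C × R, inferInstance, inferInstance, fun f => f, fun f => f.injective,
    fun _ hF h0 => absurd (card_pos.2 hF) (by omega), exists_embedding_forall_eq⟩

variable {g : ℕ} {A B R C : Type}

theorem hasSparseLift_empty [Finite B] [Finite R] [Nonempty C] (a : B → R → A) :
    HasSparseLift g C a ∅ := by
  refine ⟨B × R, B, inferInstance, inferInstance, fun x => a x.1 x.2, id, fun b r => (b, r),
    fun _ _ => rfl, sparse_of_pairwise_disjoint fun b b' hne => ?_,
    fun _ => ⟨fun _ => Classical.arbitrary C, fun b => ⟨b, rfl, fun _ => False.elim⟩⟩⟩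
  rw [onFun, Set.disjoint_left]
  rintro _ ⟨r, rfl⟩ ⟨r', h⟩
  exact hne (congrArg Prod.fst h).symm

section Amalgam

variable {V K Y : Type} {τ : V → A} {s : A}

open Classical in
/-- The `k`-th copy of `V` in the amalgamation of copies of `V` along their fibres over `s`:
the fibre is placed on the edge `h k` of a hypergraph on `Y`, the rest of the copy is private. -/
noncomputable def amalgamCopy (h : K → {v // τ v = s} → Y) (k : K) (v : V) : Y ⊕ K × V :=
  if hv : τ v = s then .inl (h k ⟨v, hv⟩) else .inr (k, v)

variable {h : K → {v // τ v = s} → Y} {k k' : K} {v w : V}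

theorem amalgamCopy_of_eq (hv : τ v = s) : amalgamCopy h k v = .inl (h k ⟨v, hv⟩) :=
  dif_pos hv

theorem amalgamCopy_of_ne (hv : τ v ≠ s) : amalgamCopy h k v = .inr (k, v) :=
  dif_neg hv

theorem amalgamCopy_injective (hinj : Injective (h k)) : Injective (amalgamCopy h k) := by
  intro v w hvw
  by_cases hv : τ v = s <;> by_cases hw : τ w = s <;>
    simp only [amalgamCopy_of_eq, amalgamCopy_of_ne, hv, hw, ne_eq, not_false_eq_true,
      Sum.inl.injEq, Sum.inr.injEq, reduceCtorEq, Prod.mk.injEq, true_and] at hvw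
  · exact congrArg Subtype.val (hinj hvw)
  · exact hvw

theorem amalgamCopy_mem_inl_range_iff :
    amalgamCopy h k v ∈ Sum.inl '' Set.range (h k) ↔ τ v = s := by
  by_cases hv : τ v = s
  · exact iff_of_true ⟨_, ⟨_, rfl⟩, (amalgamCopy_of_eq hv).symm⟩ hv
  · simp [amalgamCopy_of_ne hv, hv]

theorem eq_of_amalgamCopy_eq (hv : τ v ≠ s) (hvw : amalgamCopy h k v = amalgamCopy h k' w) :
    k = k' := by
  by_cases hw : τ w = s
  · simp [amalgamCopy_of_ne hv, amalgamCopy_of_eq hw] at hvw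
  · simp only [amalgamCopy_of_ne hv, amalgamCopy_of_ne hw, Sum.inr.injEq, Prod.mk.injEq] at hvw
    exact hvw.1

theorem elim_amalgamCopy (h : K → {v // τ v = s} → Y) (k : K) (v : V) :
    Sum.elim (fun _ => s) (fun x => τ x.2) (amalgamCopy h k v) = τ v := by
  by_cases hv : τ v = s
  · rw [amalgamCopy_of_eq hv, Sum.elim_inl, hv]
  · rw [amalgamCopy_of_ne hv, Sum.elim_inr]

theorem Sparse.amalgam {E : Type} {I : E → Set V} (hI : Sparse (g + 1) I)
    (hIτ : ∀ e, Set.InjOn τ (I e)) (hinj : ∀ k, Injective (h k))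
    (hh : Sparse g (fun k => Set.range (h k))) :
    Sparse (g + 1) (fun x : Σ _ : K, E => amalgamCopy h x.1 '' I x.2) := by
  refine Sparse.sigma_succ (J := fun k => Sum.inl '' Set.range (h k))
    (I := fun k e => amalgamCopy h k '' I e) (hh.image Sum.inl_injective)
    (fun k => hI.image (amalgamCopy_injective (hinj k))) ?_ ?_
  · rintro k k' hne e e' _ ⟨⟨v, -, rfl⟩, ⟨w, -, hw⟩⟩
    exact amalgamCopy_mem_inl_range_iff.2
      (by_contra fun hv => hne (eq_of_amalgamCopy_eq hv hw.symm))
  · rintro k e _ ⟨⟨v, hv, rfl⟩, hvs⟩ _ ⟨⟨w, hw, rfl⟩, hws⟩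
    rw [amalgamCopy_mem_inl_range_iff] at hvs hws
    rw [hIτ e hv hw (hvs.trans hws.symm)]

end Amalgam

theorem HasSparseLift.insert (hRamsey : ∀ T : Type, Finite T → HasSparseRamsey g T C)
    {a : B → R → A} (ha : ∀ b, Injective (a b)) {S : Set A} (h : HasSparseLift (g + 1) C a S)
    (s : A) : HasSparseLift (g + 1) C a (insert s S) := by
  classical
  obtain ⟨V, E, _, _, τ, π, ed, hτ, hsparse, hlift⟩ := h
  obtain ⟨Y, K, _, _, h, hinj, hY, hmono⟩ := hRamsey {v // τ v = s} inferInstance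
  refine ⟨Y ⊕ K × V, Σ _ : K, E, inferInstance, inferInstance,
    Sum.elim (fun _ => s) (fun x => τ x.2), fun x => π x.2,
    fun x r => amalgamCopy h x.1 (ed x.2 r), fun x r => ?_, ?_, fun χ => ?_⟩
  · exact (elim_amalgamCopy h _ _).trans (hτ _ r)
  · have hτ_injOn (e : E) : Set.InjOn τ (Set.range (ed e)) := by
      rintro _ ⟨r, rfl⟩ _ ⟨r', rfl⟩ hr
      rw [ha _ ((hτ e r).symm.trans (hr.trans (hτ e r')))]
    simpa only [← Set.range_comp, comp_def] using hsparse.amalgam hτ_injOn hinj hY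
  · obtain ⟨k, c, hc⟩ := hmono (fun y => χ (.inl y))
    obtain ⟨κ, hκ⟩ := hlift (fun v => χ (amalgamCopy h k v))
    refine ⟨update κ s c, fun b => ?_⟩
    obtain ⟨e, rfl, he⟩ := hκ b
    refine ⟨⟨k, e⟩, rfl, fun r hr => ?_⟩
    by_cases hs : a (π e) r = s
    · rw [hs, update_self, ← hc ⟨ed e r, (hτ e r).trans hs⟩, ← amalgamCopy_of_eq]
    · rw [update_of_ne hs, ← he r (hr.resolve_left hs)]

theorem hasSparseLift_univ [Finite A] [Finite B] [Finite R] [Nonempty C]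
    (hRamsey : ∀ T : Type, Finite T → HasSparseRamsey g T C)
    {a : B → R → A} (ha : ∀ b, Injective (a b)) : HasSparseLift (g + 1) C a Set.univ :=
  Set.finite_univ.induction_on_subset _ (hasSparseLift_empty a)
    fun _ _ _ h => h.insert hRamsey ha _

theorem exists_sparse_ramsey (g : ℕ) (R C : Type) [Finite R] [Finite C] :
    HasSparseRamsey g R C := by
  cases isEmpty_or_nonempty C
  · exact ⟨Unit, Empty, inferInstance, inferInstance, Empty.elim, fun e => e.elim,
      fun _ ⟨e, _⟩ => e.elim, fun χ => isEmptyElim (χ ())⟩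
  induction g generalizing R with
  | zero => exact hasSparseRamsey_zero R C
  | succ g ih =>
    obtain ⟨V, E, hV, hE, τ, π, ed, hτ, hsparse, hlift⟩ :=
      hasSparseLift_univ (C := C) (fun T _ => ih T) (fun f : R ↪ C × R => f.injective)
    refine ⟨V, E, hV, hE, ed, fun e r r' h => (π e).injective ?_, hsparse, fun χ => ?_⟩
    · rw [← hτ, ← hτ, h]
    · obtain ⟨κ, hκ⟩ := hlift χ
      obtain ⟨f, c, hf⟩ := exists_embedding_forall_eq κ
      obtain ⟨e, -, he⟩ := hκ f
      exact ⟨e, c, fun r => (he r trivial).trans (hf r)⟩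

end RamseyHypergraphs

section EdgeFamilies

variable {V E : Type*}

/-- The set of endpoints of an edge, for a graph given by a family `ed` of pairs of vertices. -/
def ends (ed : E → V × V) (e : E) : Set V := {(ed e).1, (ed e).2}

/-- `f` is a proper colouring of the graph given by the family `ed` of pairs of vertices. -/
def IsProper {α : Type*} (ed : E → V × V) (f : V → α) : Prop :=
  ∀ e, f (ed e).1 ≠ f (ed e).2

theorem ends_prodMap {V' : Type*} (φ : V → V') (ed : E → V × V) :
    ends (fun e => (ed e).map φ φ) = fun e => φ '' ends ed e :=
  funext fun _ => (Set.image_pair φ _ _).symm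

theorem ends_sumElim {E' : Type*} (ed : E → V × V) (ed' : E' → V × V) :
    ends (Sum.elim ed ed') = Sum.elim (ends ed) (ends ed') := by
  ext (e | e) <;> rfl

variable {g : ℕ}

/-- The edges of the `k`-th copy of the graph `ed`, together with a pendant edge from each vertex
`v` of this copy to the point `h k v` of `Y`. -/
def copyWithPendants {K Y : Type*} (ed : E → V × V) (h : K → V → Y) (k : K) :
    E ⊕ V → (Y ⊕ K × V) × (Y ⊕ K × V) :=
  Sum.elim (fun e => (ed e).map (fun v => .inr (k, v)) (fun v => .inr (k, v)))
    (fun v => (.inr (k, v), .inl (h k v)))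

theorem Sparse.ends_copyWithPendants {K Y : Type*} {ed : E → V × V} (hed : Sparse g (ends ed))
    {h : K → V → Y} {k : K} (hinj : Injective (h k)) :
    Sparse g (ends (copyWithPendants ed h k)) := by
  rw [copyWithPendants, ends_sumElim]
  refine Sparse.sum_pendant ?_ fun v => ?_
  · rw [ends_prodMap]
    exact hed.image (Sum.inr_injective.comp (Prod.mk_right_injective k))
  · refine (Set.subsingleton_singleton (a := Sum.inr (k, v))).anti ?_
    rintro _ ⟨rfl | rfl, e | w, hne, hw⟩
    · rfl
    · rfl
    · simp [ends] at hw
    · simp only [Sum.elim_inr, ends, Set.mem_insert_iff, reduceCtorEq, Set.mem_singleton_iff,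
        Sum.inl.injEq, false_or] at hw
      exact (hne (congrArg _ (hinj hw.symm))).elim

theorem Sparse.ends_sigma_copyWithPendants {K Y : Type*} {ed : E → V × V} (hed : Sparse g (ends ed))
    {h : K → V → Y} (hinj : ∀ k, Injective (h k)) (hh : Sparse g (fun k => Set.range (h k))) :
    Sparse g (ends (fun x : Σ _ : K, E ⊕ V => copyWithPendants ed h x.1 x.2)) := by
  have hcases (k : K) (e : E ⊕ V) {x : Y ⊕ K × V}
      (hx : x ∈ ends (copyWithPendants ed h k) e) :
      (∃ v, x = .inr (k, v)) ∨ x ∈ Sum.inl '' Set.range (h k) := by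
    rcases e with e | v <;> rcases hx with rfl | rfl
    exacts [.inl ⟨_, rfl⟩, .inl ⟨_, rfl⟩, .inl ⟨_, rfl⟩, .inr ⟨_, ⟨v, rfl⟩, rfl⟩]
  refine Sparse.sigma (hh.image Sum.inl_injective) (fun k => hed.ends_copyWithPendants (hinj k)) ?_
  rintro k k' hne e e' x ⟨hx, hx'⟩
  rcases hcases k e hx with ⟨v, rfl⟩ | hJ
  · rcases hcases k' e' hx' with ⟨w, ⟨⟩⟩ | ⟨_, -, ⟨⟩⟩
    exact (hne rfl).elim
  · exact hJ

theorem exists_sparse_choosable_not_colorable (g k : ℕ) :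
    ∃ (V E : Type) (_ : Finite V) (_ : Finite E) (ed : E → V × V), Sparse g (ends ed) ∧
      (∀ L : V → Finset ℕ, (∀ v, k < #(L v)) → ∃ f : V → ℕ, (∀ v, f v ∈ L v) ∧ IsProper ed f) ∧
      ¬ ∃ f : V → Fin k, IsProper ed f := by
  induction k with
  | zero =>
    refine ⟨Unit, Empty, inferInstance, inferInstance, Empty.elim, fun F ⟨e, _⟩ => e.elim,
      fun L hL => ?_, fun ⟨f, _⟩ => (f ()).elim0⟩
    choose f hf using fun v => card_pos.1 (hL v)
    exact ⟨f, hf, fun e => e.elim⟩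
  | succ k ih =>
    obtain ⟨V, E, _, _, ed, hsparse, hchoose, hcolor⟩ := ih
    obtain ⟨Y, K, _, _, h, hinj, hY, hmono⟩ := exists_sparse_ramsey g V (Fin (k + 1))
    refine ⟨Y ⊕ K × V, Σ _ : K, E ⊕ V, inferInstance, inferInstance, _,
      hsparse.ends_sigma_copyWithPendants hinj hY, fun L hL => ?_, fun ⟨χ, hχ⟩ => ?_⟩
    · choose c hc using fun y => card_pos.1 ((Nat.succ_pos k).trans (hL (.inl y)))
      choose f hfL hf using fun i => hchoose (fun v => (L (.inr (i, v))).erase (c (h i v)))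
        fun v => (Nat.lt_sub_of_add_lt (hL _)).trans_le pred_card_le_card_erase
      refine ⟨Sum.elim c (fun x => f x.1 x.2), ?_, ?_⟩
      · rintro (y | ⟨i, v⟩)
        exacts [hc y, mem_of_mem_erase (hfL i v)]
      · rintro ⟨i, e | v⟩
        exacts [hf i e, ne_of_mem_erase (hfL i v)]
    · obtain ⟨i, c, hc⟩ := hmono (fun y => χ (.inl y))
      have hne (v : V) : χ (.inr (i, v)) ≠ c := fun h => hχ ⟨i, .inr v⟩ (h.trans (hc v).symm)
      choose f hf using fun v => Fin.exists_succAbove_eq (hne v)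
      refine hcolor ⟨f, fun e he => hχ ⟨i, .inl e⟩ ?_⟩
      change χ (.inr (i, _)) = χ (.inr (i, _))
      rw [← hf, ← hf, he]

/-- The edges joining, in the layered graph on `Y × W`, the vertices over `(s m).1` and `(s m).2`
in the two layers of the hypergraph edge `h k` that are reserved for `m`. -/
def crossEdge {K M W Y : Type*} (s : M → W × W) (h : K → Option (M × Bool) → Y) (x : Σ _ : K, M) :
    (Y × W) × (Y × W) :=
  ((h x.1 (some (x.2, false)), (s x.2).1), (h x.1 (some (x.2, true)), (s x.2).2))

/-- The edges of the graph on `Y × W` formed by a copy of the graph `ed` on every layer `{y} × W`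
and the further edges `cr`. -/
def layers {W Y D X : Type*} (ed : D → W × W) (cr : X → (Y × W) × (Y × W)) :
    (Σ _ : Y, D) ⊕ X → (Y × W) × (Y × W) :=
  Sum.elim (fun p => (ed p.2).map (Prod.mk p.1) (Prod.mk p.1)) cr

theorem Sparse.ends_layers {K M W Y D : Type*} {ed : D → W × W} (hed : Sparse g (ends ed))
    (s : M → W × W) {h : K → Option (M × Bool) → Y} (hinj : ∀ k, Injective (h k))
    (hh : Sparse g (fun k => Set.range (h k))) :
    Sparse g (ends (layers ed (crossEdge s h))) := by
  rw [layers, ends_sumElim]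
  have fst_ends (x : Σ _ : K, M) : Prod.fst '' ends (crossEdge s h) x =
      {h x.1 (some (x.2, false)), h x.1 (some (x.2, true))} := Set.image_pair _ _ _
  have hinj' (k : K) {m m' : M} {b b' : Bool} (he : h k (some (m, b)) = h k (some (m', b'))) :
      m = m' ∧ b = b' := by simpa using hinj k he
  refine Sparse.blowUp (ρ := Prod.fst)
    (G := fun y => ends fun d => (ed d).map (Prod.mk y) (Prod.mk y)) (fun y => ?_) ?_ ?_ ?_
  · rw [ends_prodMap]
    exact hed.image (Prod.mk_right_injective y)
  · rintro y d _ (rfl | rfl) <;> rfl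
  · refine Sparse.sigma (J := fun k => Set.range (h k)) hh
      (I := fun k m => Prod.fst '' ends (crossEdge s h) ⟨k, m⟩) (fun k => ?_) ?_
    · refine sparse_of_pairwise_disjoint fun m m' hne => ?_
      rw [onFun, fst_ends, fst_ends, Set.disjoint_left]
      rintro _ (rfl | rfl) (he | he) <;> exact hne (hinj' k he).1
    · rintro k k' - m m' y ⟨⟨_, rfl | rfl, rfl⟩, -⟩ <;> exact ⟨_, rfl⟩
  · rintro ⟨k, m⟩ _ (rfl | rfl) _ (rfl | rfl) he
    exacts [rfl, absurd (hinj' k he).2 (by simp), absurd (hinj' k he).2 (by simp), rfl]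

theorem exists_sparse_layering {C D M W : Type} [Finite C] [Finite M] [Finite W]
    {ed : D → W × W} (hed : Sparse g (ends ed)) (s : M → W × W) :
    ∃ (Y X : Type) (_ : Finite Y) (_ : Finite X) (cr : X → (Y × W) × (Y × W)),
      (∀ x, ∃ m, ((cr x).1.2, (cr x).2.2) = s m) ∧
      Sparse g (ends (layers ed cr)) ∧
      ∀ χ : Y × W → C, IsProper cr χ → ∃ y, IsProper s (fun w => χ (y, w)) := by
  obtain ⟨Y, K, _, _, h, hinj, hsparse, hmono⟩ :=
    exists_sparse_ramsey g (Option (M × Bool)) (W → C)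
  refine ⟨Y, Σ _ : K, M, inferInstance, inferInstance, crossEdge s h, fun x => ⟨x.2, rfl⟩,
    hed.ends_layers s hinj hsparse, fun χ hχ => ?_⟩
  obtain ⟨k, c, hc⟩ := hmono (fun y w => χ (y, w))
  refine ⟨h k none, fun m => ?_⟩
  rw [hc]
  have hm := hχ ⟨k, m⟩
  rwa [crossEdge, congrFun (hc _) _, congrFun (hc _) _] at hm

end EdgeFamilies

section Girth

variable {V E : Type*} {g : ℕ} {G : SimpleGraph V}

theorem exists_ne_mem_edges_of_isCycle {a : V} {w : G.Walk a a} (hw : w.IsCycle) {e : Sym2 V}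
    (he : e ∈ w.edges) {v : V} (hv : v ∈ e) : ∃ e' ∈ w.edges, e' ≠ e ∧ v ∈ e' := by
  obtain ⟨x, rfl⟩ := Sym2.mem_iff_exists.1 hv
  have hcard := hw.ncard_neighborSet_toSubgraph_eq_two (w.fst_mem_support_of_mem_edges he)
  obtain ⟨y, hy, hyx⟩ := Set.exists_ne_of_one_lt_ncard (hcard ▸ one_lt_two) x
  exact ⟨s(v, y), w.mem_edges_toSubgraph.1 hy, fun h => hyx (Sym2.congr_right.1 h),
    Sym2.mem_mk_left v y⟩

theorem Sparse.lt_egirth {I : E → Set V} (hI : Sparse g I)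
    (hG : ∀ u w, G.Adj u w → ∃ e, I e = {u, w}) : (g : ℕ∞) < G.egirth := by
  classical
  have hedge (e : G.edgeSet) : ∃ x, I x = (e : Sym2 V) := by
    obtain ⟨⟨u, w⟩, he⟩ := e
    simpa using hG u w he
  choose φ hφ using hedge
  have hφ_inj : Injective φ := fun e e' h =>
    Subtype.ext (SetLike.coe_injective ((hφ e).symm.trans ((congrArg I h).trans (hφ e'))))
  rw [← ENat.add_one_le_iff (ENat.natCast_ne_top g), SimpleGraph.le_egirth]
  intro a w hw
  by_contra hlt
  have hlen : w.length ≤ g := by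
    rw [not_le] at hlt
    exact Nat.lt_succ_iff.1 (by exact_mod_cast hlt)
  let F : Finset G.edgeSet := w.edges.toFinset.subtype (· ∈ G.edgeSet)
  have mem_F {e : G.edgeSet} : e ∈ F ↔ e.1 ∈ w.edges := by simp [F]
  have hF : F.Nonempty := by
    obtain ⟨e, he⟩ := List.exists_mem_of_ne_nil _ (SimpleGraph.Walk.edges_eq_nil.not.2 hw.not_nil)
    exact ⟨⟨e, w.edges_subset_edgeSet he⟩, mem_F.2 he⟩
  have hFg : #F ≤ g := calc
    #F ≤ #w.edges.toFinset := by
      rw [card_subtype]; exact card_filter_le _ _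
    _ ≤ w.length := by simpa using w.edges.toFinset_card_le
    _ ≤ g := hlen
  obtain ⟨e, he, hleaf⟩ := hI.comp hφ_inj F hF hFg
  have hshared {v : V} (hv : v ∈ e.1) : v ∈ shared (I ∘ φ) F e := by
    obtain ⟨e', he', hne, hv'⟩ := exists_ne_mem_edges_of_isCycle hw (mem_F.1 he) hv
    refine ⟨(hφ e).ge hv, ⟨e', w.edges_subset_edgeSet he'⟩, mem_F.2 he', ?_, (hφ _).ge hv'⟩
    exact fun h => hne (congrArg Subtype.val h)
  obtain ⟨⟨u, v⟩, huv⟩ := e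
  exact huv.ne (hleaf (hshared (Sym2.mem_mk_left u v)) (hshared (Sym2.mem_mk_right u v)))

/-- The simple graph with the edges of the family `ed`. -/
def graphOf (ed : E → V × V) : SimpleGraph V :=
  SimpleGraph.fromRel fun u w => ∃ e, ed e = (u, w)

variable {ed : E → V × V}

theorem graphOf_adj (hed : ∀ e, (ed e).1 ≠ (ed e).2) (e : E) :
    (graphOf ed).Adj (ed e).1 (ed e).2 :=
  (SimpleGraph.fromRel_adj _ _ _).2 ⟨hed e, .inl ⟨e, rfl⟩⟩

theorem exists_ends_eq_of_adj {u w : V} (h : (graphOf ed).Adj u w) : ∃ e, ends ed e = {u, w} := by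
  obtain ⟨-, ⟨e, he⟩ | ⟨e, he⟩⟩ := (SimpleGraph.fromRel_adj _ _ _).1 h
  · exact ⟨e, by rw [ends, he]⟩
  · exact ⟨e, by rw [ends, he, Set.pair_comm]⟩

theorem IsProper.ne_of_adj {α : Type*} {f : V → α} (hf : IsProper ed f) ⦃u w : V⦄
    (h : (graphOf ed).Adj u w) : f u ≠ f w := by
  obtain ⟨-, ⟨e, he⟩ | ⟨e, he⟩⟩ := (SimpleGraph.fromRel_adj _ _ _).1 h
  · simpa [he] using hf e
  · simpa [he] using (hf e).symm

open scoped Fin.NatCast in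
theorem exists_mem_add_one_notMem {n : ℕ} [NeZero n] {F : Finset (Fin n)} (hF : F.Nonempty)
    (hFn : #F < n) : ∃ i ∈ F, i + 1 ∉ F := by
  by_contra! hclosed
  obtain ⟨i, hi⟩ := hF
  have hmem (t : ℕ) : i + t ∈ F := by
    induction t with
    | zero => simpa using hi
    | succ t ih => simpa [add_assoc] using hclosed _ ih
  have huniv : F = univ := eq_univ_of_forall fun j => by simpa using hmem (j - i).val
  simp [huniv] at hFn

theorem sparse_cycle {n : ℕ} (hg : g < n + 2) :
    Sparse g (fun i : Fin (n + 2) => ({i, i + 1} : Set (Fin (n + 2)))) := by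
  intro F hF hFg
  obtain ⟨i, hi, hi'⟩ := exists_mem_add_one_notMem hF (hFg.trans_lt hg)
  refine ⟨i, hi, (Set.subsingleton_singleton (a := i)).anti ?_⟩
  rintro _ ⟨rfl | rfl, j, hj, hne, hv⟩
  · rfl
  · rcases hv with rfl | hv
    · exact (hi' hj).elim
    · exact (hne (add_right_cancel hv).symm).elim

end Girth

section EvenCycle

variable {α : Type*}

theorem exists_cyclic_choice_of_notMem {n : ℕ} {L : Fin (n + 1) → Finset α}
    (hL : ∀ v, 2 ≤ #(L v)) {c : α} (h0 : c ∈ L 0) (hlast : c ∉ L (Fin.last n)) :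
    ∃ f : Fin (n + 1) → α, (∀ v, f v ∈ L v) ∧ ∀ v, f v ≠ f (v + 1) := by
  choose next hnext hne using fun v c => exists_mem_ne (hL v) c
  let f : Fin (n + 1) → α := Fin.induction c fun i prev => next i.succ prev
  have f_zero : f 0 = c := rfl
  have f_succ (i : Fin n) : f i.succ = next i.succ (f i.castSucc) := Fin.induction_succ ..
  have hf (v : Fin (n + 1)) : f v ∈ L v := by
    cases v using Fin.cases with
    | zero => exact h0
    | succ i => rw [f_succ]; exact hnext _ _
  refine ⟨f, hf, fun v => ?_⟩
  cases v using Fin.lastCases with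
  | last =>
    rw [Fin.last_add_one, f_zero]
    exact ne_of_mem_of_not_mem (hf _) hlast
  | cast i =>
    rw [Fin.coeSucc_eq_succ, f_succ]
    exact (hne _ _).symm

theorem forall_zero_subset_of_forall_add_one_subset {n : ℕ} {L : Fin (n + 1) → Finset α}
    (h : ∀ v, L (v + 1) ⊆ L v) (v : Fin (n + 1)) : L 0 ⊆ L v := by
  induction v using Fin.reverseInduction with
  | last => simpa using h (Fin.last n)
  | cast i ih => exact ih.trans (by simpa using h i.castSucc)

theorem exists_cycleGraph_list_coloring {n : ℕ} (hn : Even n) {L : Fin n → Finset α}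
    (hL : ∀ v, 2 ≤ #(L v)) :
    ∃ f : Fin n → α, (∀ v, f v ∈ L v) ∧
      ∀ ⦃u w⦄, (SimpleGraph.cycleGraph n).Adj u w → f u ≠ f w := by
  obtain _ | _ | n := n
  · exact ⟨fun v => v.elim0, fun v => v.elim0, fun v => v.elim0⟩
  · simp at hn
  by_cases h : ∀ v, L (v + 1) ⊆ L v
  · have hL0 := forall_zero_subset_of_forall_add_one_subset h
    obtain ⟨a, ha, b, hb, hab⟩ := one_lt_card.1 (hL 0)
    let χ := SimpleGraph.cycleGraph.bicoloring_of_even (n + 2) hn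
    have hinj : Injective (fun x : Bool => if x then a else b) :=
      Bool.injective_iff.2 (by simpa using hab.symm)
    refine ⟨fun v => if χ v then a else b, fun v => ?_, fun u w huw => hinj.ne (χ.valid huw)⟩
    dsimp only
    split_ifs
    exacts [hL0 v ha, hL0 v hb]
  · push Not at h
    obtain ⟨i, hi⟩ := h
    obtain ⟨c, hc, hci⟩ := Finset.not_subset.1 hi
    obtain ⟨f, hfL, hf⟩ := exists_cyclic_choice_of_notMem (L := fun v => L (v + (i + 1)))
      (fun v => hL _) (c := c) (by simpa using hc) (by
        rwa [add_left_comm, Fin.last_add_one, add_zero])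
    have hf' (v : Fin (n + 2)) : f (v - (i + 1)) ≠ f (v + 1 - (i + 1)) := by
      rw [add_sub_right_comm]
      exact hf _
    refine ⟨fun v => f (v - (i + 1)), fun v => by simpa using hfL (v - (i + 1)), fun u w huw => ?_⟩
    rcases SimpleGraph.cycleGraph_adj.1 huw with h | h
    · rw [sub_eq_iff_eq_add'.1 h]
      exact (hf' w).symm
    · rw [sub_eq_iff_eq_add'.1 h]
      exact hf' u

theorem lamChoosable_cycleGraph {n : ℕ} (hn : Even n) {lam : Multiset ℕ} (hlam : 2 ≤ lam.sum) :
    LamChoosable lam (SimpleGraph.cycleGraph n) :=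
  fun _ hL => exists_cycleGraph_list_coloring hn fun v => hlam.trans_eq (hL.1 v).symm

end EvenCycle

section Partitions

variable {ι ι' : Type*} [Fintype ι] [Fintype ι'] {ks : ι → ℕ} {ks' : ι' → ℕ}

theorem exists_eq_map_univ.{u} {α : Type u} (s : Multiset α) :
    ∃ (ι : Type u) (_ : Fintype ι) (f : ι → α), s = univ.val.map f := by
  classical
  exact ⟨s.ToType, inferInstance, fun x => x.1, s.map_univ_coe.symm⟩

theorem exists_equiv_of_map_univ_eq {α : Type*} {f : ι → α} {f' : ι' → α}
    (h : univ.val.map f = univ.val.map f') : ∃ σ : ι ≃ ι', ∀ i, f' (σ i) = f i := by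
  classical
  have hcard (a : α) : Fintype.card {i // f i = a} = Fintype.card {i // f' i = a} := by
    have hcount := congrArg (Multiset.count a) h
    rw [Multiset.count_map, Multiset.count_map] at hcount
    simp only [eq_comm (a := a)] at hcount
    rwa [Fintype.card_subtype, Fintype.card_subtype]
  exact ⟨Equiv.ofFiberEquiv fun a => Fintype.equivOfCardEq (hcard a),
    fun i => Equiv.ofFiberEquiv_map _ i⟩

theorem partitionLE_of_le_sum_fiber [DecidableEq ι] (hpos : ∀ j, 0 < ks' j) (φ : ι' → ι)
    (hφ : ∀ i, ks i ≤ ∑ j with φ j = i, ks' j) :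
    PartitionLE (univ.val.map ks) (univ.val.map ks') := by
  refine ⟨univ.val.map fun i => ∑ j with φ j = i, ks' j, ?_,
    univ.val.map fun i => (univ.filter fun j => φ j = i).val.map ks', ?_, ?_, ?_⟩
  · exact Multiset.rel_map.2 (Multiset.rel_refl_of_refl_on fun i _ => hφ i)
  · exact Multiset.map_map ..
  · have map_eq_sum (s : Finset ι') : s.val.map ks' = ∑ j ∈ s, {ks' j} := by
      rw [← Multiset.sum_map_singleton (s.val.map ks'), Multiset.map_map]; rfl
    simp only [map_eq_sum]
    exact sum_fiberwise univ φ fun j => ({ks' j} : Multiset ℕ)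
  · simp only [Multiset.mem_map]
    rintro _ ⟨i, -, rfl⟩ _ ha
    obtain ⟨j, -, rfl⟩ := Multiset.mem_map.1 ha
    exact hpos j

theorem partitionLE_singleton {n : ℕ} {lam : Multiset ℕ} (hpos : ∀ a ∈ lam, 0 < a)
    (hn : n ≤ lam.sum) : PartitionLE {n} lam :=
  ⟨{lam.sum}, .cons hn .zero, {lam}, by simp, by simp, by simpa using hpos⟩

theorem two_le_sum_of_not_partitionLE {k k' : ℕ} {lam lam' : Multiset ℕ} (hk : 0 < k)
    (hk' : 0 < k') (hlam : IsPartitionOf lam k) (hlam' : IsPartitionOf lam' k')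
    (h : ¬ PartitionLE lam lam') : 2 ≤ lam.sum := by
  by_contra! hlt
  obtain ⟨hpos, rfl⟩ := hlam
  have hsum : lam.sum = 1 := by omega
  have hlam_eq : lam = {1} := Nat.Partition.partition_one_parts ⟨lam, hpos _, hsum⟩
  exact h (hlam_eq ▸ partitionLE_singleton hlam'.1 (hk'.trans_eq hlam'.2.symm))

end Partitions

section LamAssignments

variable {V : Type*} {ι : Type*} [Fintype ι] {ks : ι → ℕ} {lam : Multiset ℕ}

theorem isLamAssignment_map_univ_iff {L : V → Finset ℕ} :
    IsLamAssignment (univ.val.map ks) L ↔ ∃ Cs : ι → Finset ℕ, Pairwise (Disjoint on Cs) ∧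
      (∀ v, L v ⊆ univ.biUnion Cs) ∧ ∀ v i, #(L v ∩ Cs i) = ks i := by
  classical
  constructor
  · rintro ⟨-, q, ks₀, Cs, hks, hdisj, hcover, hcard⟩
    rw [← Fin.univ_val_map] at hks
    obtain ⟨σ, hσ⟩ := exists_equiv_of_map_univ_eq hks.symm
    refine ⟨Cs ∘ σ, fun i i' h => hdisj (σ.injective.ne h), fun v c hc => ?_, fun v i => ?_⟩
    · obtain ⟨i, hi⟩ := (hcover c).1 ⟨v, hc⟩
      exact mem_biUnion.2 ⟨σ.symm i, mem_univ _, by simpa using hi⟩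
    · exact (hcard v (σ i)).trans (hσ i)
  · rintro ⟨Cs, hdisj, hcover, hcard⟩
    let e := Fintype.equivFin ι
    refine ⟨fun v => ?_, Fintype.card ι, ks ∘ e.symm,
      fun i => {c ∈ Cs (e.symm i) | ∃ v, c ∈ L v}, ?_, fun i i' h => ?_, fun c => ?_, fun v i => ?_⟩
    · rw [← inter_eq_left.2 (hcover v), inter_biUnion, card_biUnion fun i _ i' _ h =>
        (hdisj h).mono inter_subset_right inter_subset_right]
      exact sum_congr rfl fun i _ => hcard v i
    · rw [← Fin.univ_val_map, ← Multiset.map_map, Multiset.map_univ_val_equiv]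
    · exact disjoint_filter_filter (hdisj (e.symm.injective.ne h))
    · refine ⟨fun ⟨v, hv⟩ => ?_, fun ⟨i, hi⟩ => (mem_filter.1 hi).2⟩
      obtain ⟨i, -, hi⟩ := mem_biUnion.1 (hcover v hv)
      exact ⟨e i, mem_filter.2 ⟨by simpa using hi, v, hv⟩⟩
    · rw [comp_apply, ← hcard v (e.symm i)]
      congr 1
      ext c
      simp only [mem_inter, mem_filter]
      tauto

theorem IsLamAssignment.comp {V' : Type*} {L : V → Finset ℕ} (hL : IsLamAssignment lam L)
    (φ : V' → V) : IsLamAssignment lam (L ∘ φ) := by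
  classical
  obtain ⟨ι, _, ks, rfl⟩ := exists_eq_map_univ lam
  obtain ⟨Cs, hdisj, hcover, hcard⟩ := isLamAssignment_map_univ_iff.1 hL
  exact isLamAssignment_map_univ_iff.2
    ⟨Cs, hdisj, fun v => hcover (φ v), fun v => hcard (φ v)⟩

theorem lamChoosable_graphOf {E : Type*} {ed : E → V × V} (t : V → ι)
    (hed : ∀ L : V → Finset ℕ, (∀ v, #(L v) = ks (t v)) → ∃ f : V → ℕ, (∀ v, f v ∈ L v) ∧
      ∀ e, t (ed e).1 = t (ed e).2 → f (ed e).1 ≠ f (ed e).2) :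
    LamChoosable (univ.val.map ks) (graphOf ed) := by
  classical
  intro L hL
  obtain ⟨Cs, hdisj, -, hcard⟩ := isLamAssignment_map_univ_iff.1 hL
  obtain ⟨f, hfL, hf⟩ := hed (fun v => L v ∩ Cs (t v)) fun v => hcard v (t v)
  have hfC (v : V) : f v ∈ Cs (t v) := (mem_inter.1 (hfL v)).2
  have hproper : IsProper ed f := fun e => by
    by_cases ht : t (ed e).1 = t (ed e).2
    · exact hf e ht
    · exact (hdisj ht).forall_ne_finset (hfC _) (hfC _)
  exact ⟨f, fun v => (mem_inter.1 (hfL v)).1, hproper.ne_of_adj⟩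

theorem LamChoosable.exists_coloring {α : Type*} [Finite α] {G : SimpleGraph V}
    (hG : LamChoosable (univ.val.map ks) G) {l : V → ι → Finset α} (hl : ∀ v i, #(l v i) = ks i) :
    ∃ χ : V → Σ _ : ι, α, (∀ v, (χ v).2 ∈ l v (χ v).1) ∧ ∀ ⦃u w⦄, G.Adj u w → χ u ≠ χ w := by
  classical
  have := Fintype.ofFinite α
  let e : (Σ _ : ι, α) ↪ ℕ := (Fintype.equivFin _).toEmbedding.trans Fin.valEmbedding
  have hL : IsLamAssignment (univ.val.map ks) fun v => (univ.sigma (l v)).map e := by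
    refine isLamAssignment_map_univ_iff.2
      ⟨fun i => (({i} : Finset ι).sigma fun _ => univ).map e, ?_, ?_, ?_⟩
    · intro i i' h
      rw [onFun, disjoint_map, disjoint_left]
      rintro ⟨j, a⟩ hi hi'
      simp only [mem_sigma, mem_singleton, mem_univ, and_true] at hi hi'
      exact h (hi.symm.trans hi')
    · intro v c hc
      obtain ⟨x, -, rfl⟩ := mem_map.1 hc
      exact mem_biUnion.2 ⟨x.1, mem_univ _, mem_map_of_mem e (by simp)⟩
    · intro v i
      rw [← map_inter, card_map]
      have : univ.sigma (l v) ∩ ({i} : Finset ι).sigma (fun _ => univ) =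
          ({i} : Finset ι).sigma (l v) := by
        ext
        simp [and_comm]
      rw [this, card_sigma, sum_singleton, hl]
  obtain ⟨f, hfL, hf⟩ := hG _ hL
  simp only [mem_map] at hfL
  choose x hx hxf using hfL
  exact ⟨x, fun v => (mem_sigma.1 (hx v)).2, fun u w huw h => hf huw (by rw [← hxf, ← hxf, h])⟩

theorem LamChoosable.sum {V' : Type*} {G : SimpleGraph V} {G' : SimpleGraph V'}
    (hG : LamChoosable lam G) (hG' : LamChoosable lam G') : LamChoosable lam (G ⊕g G') := by
  intro L hL
  obtain ⟨f, hfL, hf⟩ := hG _ (hL.comp Sum.inl)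
  obtain ⟨f', hfL', hf'⟩ := hG' _ (hL.comp Sum.inr)
  refine ⟨Sum.elim f f', ?_, ?_⟩
  · rintro (v | v)
    exacts [hfL v, hfL' v]
  · rintro (u | u) (w | w) h
    exacts [hf h, by simp at h, by simp at h, hf' h]

theorem LamChoosable.of_sum_left {V' : Type*} {G : SimpleGraph V} {G' : SimpleGraph V'}
    [Nonempty V] (h : LamChoosable lam (G ⊕g G')) : LamChoosable lam G := by
  intro L hL
  obtain ⟨f, hfL, hf⟩ := h _ (hL.comp (Sum.elim id fun _ => Classical.arbitrary V))
  exact ⟨f ∘ Sum.inl, fun v => hfL (.inl v), fun u w huw => hf huw⟩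

end LamAssignments

section TypedGraphs

theorem exists_sparse_typed_gadgets {B : Type} [Finite B] (g : ℕ) (n : B → ℕ) :
    ∃ (W D : Type) (_ : Finite W) (_ : Finite D) (ed : D → W × W) (t : W → B),
      Sparse g (ends ed) ∧
      (∀ L : W → Finset ℕ, (∀ w, n (t w) < #(L w)) →
        ∃ f : W → ℕ, (∀ w, f w ∈ L w) ∧ IsProper ed f) ∧
      ∀ {α : Type} {f : W → α}, IsProper ed f →
        ∀ (b : B) (A : Finset α), (∀ w, t w = b → f w ∈ A) → n b < #A := by
  choose V E hV hE ed hsparse hchoose hcolor using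
    fun b => exists_sparse_choosable_not_colorable g (n b)
  refine ⟨Σ b, V b, Σ b, E b, inferInstance, inferInstance,
    fun e => (ed e.1 e.2).map (Sigma.mk e.1) (Sigma.mk e.1), Sigma.fst, ?_, fun L hL => ?_, ?_⟩
  · refine Sparse.sigma_of_disjoint
      (I := fun b => ends fun e => (ed b e).map (Sigma.mk b) (Sigma.mk b)) (fun b => ?_) ?_
    · rw [ends_prodMap]
      exact (hsparse b).image sigma_mk_injective
    · intro b b' hne e e'
      rw [ends_prodMap, ends_prodMap, Set.disjoint_left]
      rintro _ ⟨v, -, rfl⟩ ⟨w, -, h⟩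
      exact hne (congrArg Sigma.fst h).symm
  · choose f hfL hf using fun b => hchoose b (fun v => L ⟨b, v⟩) fun v => hL ⟨b, v⟩
    exact ⟨fun w => f w.1 w.2, fun w => hfL w.1 w.2, fun e => hf e.1 e.2⟩
  · intro α f hf b A hA
    by_contra! hcard
    obtain ⟨φ⟩ : Nonempty (A ↪ Fin (n b)) :=
      Embedding.nonempty_of_card_le (by simpa using hcard)
    refine hcolor b ⟨fun v => φ ⟨f ⟨b, v⟩, hA _ rfl⟩, fun e h => hf ⟨b, e⟩ ?_⟩
    exact congrArg Subtype.val (φ.injective h)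

/-- Families of subsets of `α` in which the `j`-th set has `ks j` elements: the lists of an
assignment with colours `(j, a)`, grouped by `j`. -/
abbrev SizedLists {ι : Type*} (α : Type*) (ks : ι → ℕ) : Type _ :=
  {l : ι → Finset α // ∀ j, #(l j) = ks j}

variable {ι ι' α : Type*} [Fintype ι'] {ks : ι → ℕ} {ks' : ι' → ℕ}

theorem exists_avoiding_lists [Nonempty ι] [DecidableEq ι] [Fintype α] [DecidableEq α]
    {S : ι → ι' → Finset α} (hS : ∀ j, Pairwise (Disjoint on fun i => S i j))
    (hα : ∀ j, 2 * ks' j ≤ Fintype.card α)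
    (hks : ∀ φ : ι' → ι, ∃ i, ∑ j with φ j = i, ks' j < ks i) :
    ∃ i, ∃ l : ι' → Finset α, (∀ j, #(l j) = ks' j) ∧ ∑ j, #(l j ∩ S i j) < ks i := by
  have hlarge (j : ι') : ∃ i₀, ∀ i, i ≠ i₀ → ks' j ≤ #(S i j)ᶜ := by
    by_cases! h : ∃ i₀, #(S i₀ j)ᶜ < ks' j
    · obtain ⟨i₀, hi₀⟩ := h
      refine ⟨i₀, fun i hi => ?_⟩
      have hsub : #(S i j) ≤ #(S i₀ j)ᶜ :=
        card_le_card (subset_compl_iff_disjoint_right.2 (hS j hi))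
      have := card_add_card_compl (S i j)
      have := card_add_card_compl (S i₀ j)
      have := hα j
      omega
    · exact ⟨Classical.arbitrary ι, fun i _ => h i⟩
  choose φ hφ using hlarge
  obtain ⟨i, hi⟩ := hks φ
  have hlist (j : ι') : ∃ A : Finset α, #A = ks' j ∧ (φ j ≠ i → Disjoint A (S i j)) := by
    by_cases h : φ j = i
    · obtain ⟨A, -, hA⟩ := exists_subset_card_eq (s := (univ : Finset α)) (n := ks' j)
        (by have := hα j; rw [card_univ]; omega)
      exact ⟨A, hA, fun h' => absurd h h'⟩
    · obtain ⟨A, hAS, hA⟩ := exists_subset_card_eq (hφ j i (Ne.symm h))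
      exact ⟨A, hA, fun _ => subset_compl_iff_disjoint_right.1 hAS⟩
  choose l hl hlS using hlist
  refine ⟨i, l, hl, lt_of_le_of_lt ?_ hi⟩
  rw [sum_filter]
  refine sum_le_sum fun j _ => ?_
  split_ifs with h
  · exact (card_le_card inter_subset_left).trans_eq (hl j)
  · rw [disjoint_iff_inter_eq_empty.1 (hlS j h), card_empty]

theorem exists_type_few_colors [Nonempty ι] [DecidableEq ι] [Fintype α] {W : Type*}
    {t : W → ι × SizedLists α ks'} (hα : ∀ j, 2 * ks' j ≤ Fintype.card α)
    (hks : ∀ φ : ι' → ι, ∃ i, ∑ j with φ j = i, ks' j < ks i) {c : W → Σ _ : ι', α}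
    (hlist : ∀ w, (c w).2 ∈ (t w).2.1 (c w).1)
    (hcross : ∀ u w, (t u).1 ≠ (t w).1 → c u ≠ c w) :
    ∃ b, ∃ A : Finset (Σ _ : ι', α), (∀ w, t w = b → c w ∈ A) ∧ #A < ks b.1 := by
  classical
  let S (i : ι) (j : ι') : Finset α := {a | ∃ w, (t w).1 = i ∧ c w = ⟨j, a⟩}
  have hS (j : ι') : Pairwise (Disjoint on fun i => S i j) := fun i i' hne => by
    simp only [onFun, S, disjoint_left, mem_filter, mem_univ, true_and]
    rintro a ⟨u, rfl, hu⟩ ⟨w, rfl, hw⟩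
    exact hcross u w hne (hu.trans hw.symm)
  obtain ⟨i, l, hl, hcard⟩ := exists_avoiding_lists hS hα hks
  refine ⟨(i, ⟨l, hl⟩), univ.sigma fun j => l j ∩ S i j, fun w hw => ?_, by rwa [card_sigma]⟩
  have hmem := hlist w
  rw [hw] at hmem
  exact mem_sigma.2 ⟨mem_univ _, mem_inter.2 ⟨hmem, by
    simpa [S] using ⟨w, congrArg Prod.fst hw, rfl⟩⟩⟩

theorem lamChoosable_layers [Fintype ι] {Y W D X : Type*} {ed : D → W × W}
    {cr : X → (Y × W) × (Y × W)} (t : W → ι) (hcr : ∀ x, t (cr x).1.2 ≠ t (cr x).2.2)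
    (hed : ∀ L : W → Finset ℕ, (∀ w, #(L w) = ks (t w)) →
      ∃ f : W → ℕ, (∀ w, f w ∈ L w) ∧ IsProper ed f) :
    LamChoosable (univ.val.map ks) (graphOf (layers ed cr)) := by
  refine lamChoosable_graphOf (t ∘ Prod.snd) fun L hL => ?_
  choose f hfL hf using fun y => hed (fun w => L (y, w)) fun w => hL (y, w)
  refine ⟨fun v => f v.1 v.2, fun v => hfL v.1 v.2, ?_⟩
  rintro (p | x) ht
  exacts [hf p.1 p.2, absurd ht (hcr x)]

theorem exists_sparse_lamChoosable_not_lamChoosable {ι ι' : Type} [Fintype ι] [Fintype ι']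
    [Nonempty ι] [DecidableEq ι] {ks : ι → ℕ} {ks' : ι' → ℕ} (g : ℕ)
    (hpos : ∀ i, 0 < ks i) (hks : ∀ φ : ι' → ι, ∃ i, ∑ j with φ j = i, ks' j < ks i) :
    ∃ (V E : Type) (_ : Finite V) (ed : E → V × V), Sparse g (ends ed) ∧
      LamChoosable (univ.val.map ks) (graphOf ed) ∧
      ¬ LamChoosable (univ.val.map ks') (graphOf ed) := by
  let α := Fin (2 * ∑ j, ks' j)
  have hα (j : ι') : 2 * ks' j ≤ Fintype.card α := by
    rw [Fintype.card_fin]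
    exact Nat.mul_le_mul_left 2 (single_le_sum_of_canonicallyOrdered (mem_univ j))
  obtain ⟨W, D, _, _, ed, t, hsparse, hchoose, hcolor⟩ :=
    exists_sparse_typed_gadgets g fun b : ι × SizedLists α ks' => ks b.1 - 1
  obtain ⟨Y, X, _, _, cr, hcr, hsparse', hlayer⟩ := exists_sparse_layering
    (C := Σ _ : ι', α) hsparse
    (fun m : {m : W × W // (t m.1).1 ≠ (t m.2).1} => m.1)
  have hed (L : W → Finset ℕ) (hL : ∀ w, #(L w) = ks (t w).1) :
      ∃ f : W → ℕ, (∀ w, f w ∈ L w) ∧ IsProper ed f :=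
    hchoose L fun w => by have := hpos (t w).1; have := hL w; omega
  have hcr' (x : X) : (t (cr x).1.2).1 ≠ (t (cr x).2.2).1 := by
    obtain ⟨⟨m, hm⟩, rfl⟩ := hcr x
    exact hm
  refine ⟨Y × W, _, inferInstance, layers ed cr, hsparse',
    lamChoosable_layers (fun w => (t w).1) hcr' hed, fun hlam' => ?_⟩
  obtain ⟨f, -, hf⟩ := hed (fun w => range (ks (t w).1)) fun _ => card_range _
  have hloopless : ∀ e, (layers ed cr e).1 ≠ (layers ed cr e).2 := by
    rintro (p | x) h
    exacts [hf p.2 (congrArg (fun v => f v.2) h), hcr' x (congrArg (fun v => (t v.2).1) h)]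
  obtain ⟨χ, hχl, hχ⟩ := hlam'.exists_coloring fun v => (t v.2).2.2
  have hproper : IsProper (layers ed cr) χ := fun e => hχ (graphOf_adj hloopless e)
  obtain ⟨y, hy⟩ := hlayer χ fun x => hproper (.inr x)
  obtain ⟨b, A, hA, hcard⟩ := exists_type_few_colors hα hks (fun w => hχl (y, w))
    fun u w h => hy ⟨(u, w), h⟩
  have := hcolor (fun d => hproper (.inl ⟨y, d⟩)) b A hA
  omega

end TypedGraphs

section DisjointCycle

variable {V E : Type*} {ed : E → V × V} {g n : ℕ}

theorem exists_eq_pair_of_cycleGraph_adj {u w : Fin (n + 2)}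
    (h : (SimpleGraph.cycleGraph (n + 2)).Adj u w) :
    ∃ i, ({i, i + 1} : Set (Fin (n + 2))) = {u, w} := by
  rcases SimpleGraph.cycleGraph_adj.1 h with h | h
  · exact ⟨w, by rw [sub_eq_iff_eq_add'.1 h, Set.pair_comm]⟩
  · exact ⟨u, by rw [sub_eq_iff_eq_add'.1 h]⟩

theorem Sparse.lt_egirth_sum_cycleGraph (hed : Sparse g (ends ed)) (hg : g < n + 2) :
    (g : ℕ∞) < (graphOf ed ⊕g SimpleGraph.cycleGraph (n + 2)).egirth := by
  refine (hed.sum (sparse_cycle hg)).lt_egirth ?_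
  rintro (u | u) (w | w) h
  · obtain ⟨e, he⟩ := exists_ends_eq_of_adj h
    exact ⟨.inl e, by rw [Sum.elim_inl, he, Set.image_pair]⟩
  · simp at h
  · simp at h
  · obtain ⟨i, hi⟩ := exists_eq_pair_of_cycleGraph_adj h
    exact ⟨.inr i, by rw [Sum.elim_inr, hi, Set.image_pair]⟩

-- The girth of an acyclic graph is `0` by convention; the disjoint cycle excludes this case.
theorem Sparse.le_girth_sum_cycleGraph (hed : Sparse g (ends ed)) (hg : g < n + 3) :
    (g : ℕ∞) ≤ (graphOf ed ⊕g SimpleGraph.cycleGraph (n + 3)).girth := by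
  have hcyclic : ¬ (graphOf ed ⊕g SimpleGraph.cycleGraph (n + 3)).IsAcyclic := fun h =>
    h.embedding SimpleGraph.Embedding.sumInr _ SimpleGraph.cycleGraph.isCycle_cycle
  rw [SimpleGraph.girth, ENat.natCast_toNat (SimpleGraph.egirth_eq_top.not.2 hcyclic)]
  exact (hed.lt_egirth_sum_cycleGraph hg).le

end DisjointCycle

/-- For any positive integer `g` and any partitions `lam` of `k` and `lam'` of `k'` with
`lam ≰ lam'`, there exists a finite simple graph `G` of girth at least `g` which is
`lam`-choosable but not `lam'`-choosable. -/
theorem girth_lam_choosable (g k k' : ℕ) (hg : 0 < g) (hk : 0 < k) (hk' : 0 < k')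
    (lam lam' : Multiset ℕ) (hlam : IsPartitionOf lam k) (hlam' : IsPartitionOf lam' k')
    (hnle : ¬ PartitionLE lam lam') :
    ∃ (V : Type) (_ : Fintype V) (G : SimpleGraph V),
      (g : ℕ∞) ≤ G.girth ∧ LamChoosable lam G ∧ ¬ LamChoosable lam' G := by
  classical
  have hlam_sum : 2 ≤ lam.sum := two_le_sum_of_not_partitionLE hk hk' hlam hlam' hnle
  obtain ⟨ι, _, ks, rfl⟩ := exists_eq_map_univ lam
  obtain ⟨ι', _, ks', rfl⟩ := exists_eq_map_univ lam'
  have hpos (i : ι) : 0 < ks i := hlam.1 _ (Multiset.mem_map_of_mem ks (mem_univ i))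
  have hpos' (j : ι') : 0 < ks' j := hlam'.1 _ (Multiset.mem_map_of_mem ks' (mem_univ j))
  have : Nonempty ι := by
    by_contra! h
    simp at hlam_sum
  have hfiber (φ : ι' → ι) : ∃ i, ∑ j with φ j = i, ks' j < ks i := by
    by_contra! hφ
    exact hnle (partitionLE_of_le_sum_fiber hpos' φ hφ)
  obtain ⟨V, E, _, ed, hsparse, hchoosable, hnot⟩ :=
    exists_sparse_lamChoosable_not_lamChoosable g hpos hfiber
  have : Nonempty V := by
    by_contra! h
    exact hnot fun _ _ => ⟨isEmptyElim, isEmptyElim, isEmptyElim⟩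
  exact ⟨V ⊕ Fin (2 * g + 1 + 3), Fintype.ofFinite _, graphOf ed ⊕g SimpleGraph.cycleGraph _,
    hsparse.le_girth_sum_cycleGraph (by omega),
    hchoosable.sum (lamChoosable_cycleGraph ⟨g + 2, by omega⟩ hlam_sum),
    fun h => hnot h.of_sum_left⟩
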